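/- arXiv:2507.01298 — 2 statements merged into one kernel-verified Lean document; each statement's English description precedes it below -/
import Mathlib

section
/- Let G be a connected port-labeled graph and let T be a spanning tree of G containing a vertex v that is incident to no port-1-incident edge of T. Let w be the neighbor of v with p_{vw} = 1, and let z be the neighbor of v on the unique path in T from v to w. Then the spanning tree T' obtained from T by deleting the edge {v, z} and adding the edge {v, w} satisfies: T' is a spanning tree of G, v is incident to a port-1-incident edge of T', and every vertex that was incident to a port-1-incident edge of T is still incident to a port-1-incident edge of T'. In particular, the number of vertices incident to a port-1-incident tree edge strictly increases. -/
/-- Let `G` be a connected port-labeled graph (on at least two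
vertices) and `T` a spanning tree of `G` containing a vertex `v` incident to
no port-1-incident edge of `T`. Let `w` be the neighbor of `v` with
`p v w = 1`, and let `z` be the neighbor of `v` on the unique path in `T` from
`v` to `w`. Then `T' = T - {v,z} + {v,w}` is a spanning tree of `G`, `v` is
incident to a port-1-incident edge of `T'`, every vertex incident to a
port-1-incident edge of `T` is still incident to one in `T'`, and the number
of vertices incident to a port-1-incident tree edge strictly increases. -/
theorem swap_improves_port_one_coverage {V : Type*} [Fintype V]
    (G : SimpleGraph V) [DecidableRel G.Adj] (p : V → V → ℕ)
    (hports : ∀ v : V, Set.BijOn (p v) (G.neighborSet v) (Set.Icc 1 (G.degree v)))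
    (hG : G.Connected) (h2 : 2 ≤ Fintype.card V)
    (T : SimpleGraph V) (hTG : T ≤ G) (hT : T.IsTree)
    (v : V) (hv : ∀ u : V, T.Adj v u → ¬ (p v u = 1 ∨ p u v = 1))
    (w : V) (hw : G.Adj v w) (hpw : p v w = 1)
    (z : V) (P : T.Walk v w) (hP : P.IsPath) (hz : P.getVert 1 = z) :
    ((T.deleteEdges {s(v, z)}) ⊔ SimpleGraph.fromEdgeSet {s(v, w)}) ≤ G ∧
    ((T.deleteEdges {s(v, z)}) ⊔ SimpleGraph.fromEdgeSet {s(v, w)}).IsTree ∧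
    (∃ u : V, ((T.deleteEdges {s(v, z)}) ⊔ SimpleGraph.fromEdgeSet {s(v, w)}).Adj v u ∧
        (p v u = 1 ∨ p u v = 1)) ∧
    (∀ x : V, (∃ u : V, T.Adj x u ∧ (p x u = 1 ∨ p u x = 1)) →
        ∃ u : V, ((T.deleteEdges {s(v, z)}) ⊔ SimpleGraph.fromEdgeSet {s(v, w)}).Adj x u ∧
          (p x u = 1 ∨ p u x = 1)) ∧
    {x : V | ∃ u : V, T.Adj x u ∧ (p x u = 1 ∨ p u x = 1)}.ncard <
      {x : V | ∃ u : V,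
          ((T.deleteEdges {s(v, z)}) ⊔ SimpleGraph.fromEdgeSet {s(v, w)}).Adj x u ∧
          (p x u = 1 ∨ p u x = 1)}.ncard := by
  have hvw : v ≠ w := hw.ne
  have hzz : T.Adj v z ∧ (T.deleteEdges {s(v, z)}).Reachable z w := by
    cases P with
    | nil => exact absurd rfl hvw
    | cons h q =>
      simp only [SimpleGraph.Walk.getVert_cons_succ, SimpleGraph.Walk.getVert_zero] at hz
      subst hz
      rw [SimpleGraph.Walk.cons_isPath_iff] at hP
      refine ⟨h, SimpleGraph.reachable_deleteEdges_iff_exists_walk.2 ⟨q, fun hm => hP.2 ?_⟩⟩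
      exact q.fst_mem_support_of_mem_edges hm
  obtain ⟨hvz, hzw⟩ := hzz
  have hbr : ¬ (T.deleteEdges {s(v, z)}).Reachable v z :=
    SimpleGraph.isBridge_iff.1 (SimpleGraph.isAcyclic_iff_forall_isBridge.1 hT.IsAcyclic hvz)
  have hnr : ¬ (T.deleteEdges {s(v, z)}).Reachable v w := fun h => hbr (h.trans hzw.symm)
  have hac : ((T.deleteEdges {s(v, z)}) ⊔ SimpleGraph.fromEdgeSet {s(v, w)}).IsAcyclic :=
    (SimpleGraph.isAcyclic_add_edge_iff_of_not_reachable v w hnr).2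
      (hT.IsAcyclic.anti (SimpleGraph.deleteEdges_le _))
  have hadj : ((T.deleteEdges {s(v, z)}) ⊔ SimpleGraph.fromEdgeSet {s(v, w)}).Adj v w := by
    simp [hvw]
  have hle : T.deleteEdges {s(v, z)} ≤
    (T.deleteEdges {s(v, z)}) ⊔ SimpleGraph.fromEdgeSet {s(v, w)} := le_sup_left
  have hkeep : ∀ a b, T.Adj a b → s(a, b) ≠ s(v, z) →
      ((T.deleteEdges {s(v, z)}) ⊔ SimpleGraph.fromEdgeSet {s(v, w)}).Adj a b := by
    intro a b h hne
    exact hle (by rw [SimpleGraph.deleteEdges_adj]; exact ⟨h, hne⟩)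
  have hG' : ((T.deleteEdges {s(v, z)}) ⊔ SimpleGraph.fromEdgeSet {s(v, w)}) ≤ G := by
    refine sup_le ((SimpleGraph.deleteEdges_le _).trans hTG) ?_
    intro a b h
    rw [SimpleGraph.fromEdgeSet_adj, Set.mem_singleton_iff, Sym2.eq_iff] at h
    rcases h.1 with ⟨rfl, rfl⟩ | ⟨rfl, rfl⟩
    · exact hw
    · exact hw.symm
  have hpres : ∀ x : V, (∃ u : V, T.Adj x u ∧ (p x u = 1 ∨ p u x = 1)) →
        ∃ u : V, ((T.deleteEdges {s(v, z)}) ⊔ SimpleGraph.fromEdgeSet {s(v, w)}).Adj x u ∧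
          (p x u = 1 ∨ p u x = 1) := by
    rintro x ⟨u, hxu, hp⟩
    refine ⟨u, hkeep x u hxu ?_, hp⟩
    intro h
    rw [Sym2.eq_iff] at h
    rcases h with ⟨rfl, rfl⟩ | ⟨rfl, rfl⟩
    · exact hv _ hxu hp
    · exact hv _ hxu.symm hp.symm
  have hrvz : ((T.deleteEdges {s(v, z)}) ⊔ SimpleGraph.fromEdgeSet {s(v, w)}).Reachable v z :=
    hadj.reachable.trans (hzw.mono hle).symm
  have hreach : ∀ a b, T.Walk a b →
      ((T.deleteEdges {s(v, z)}) ⊔ SimpleGraph.fromEdgeSet {s(v, w)}).Reachable a b := by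
    intro a b q
    induction q with
    | nil => exact SimpleGraph.Reachable.refl _
    | @cons a c d h q ih =>
      refine SimpleGraph.Reachable.trans ?_ ih
      by_cases he : s(a, c) = s(v, z)
      · rw [Sym2.eq_iff] at he
        rcases he with ⟨rfl, rfl⟩ | ⟨rfl, rfl⟩
        · exact hrvz
        · exact hrvz.symm
      · exact (hkeep _ _ h he).reachable
  refine ⟨hG', ?_, ⟨w, hadj, Or.inl hpw⟩, hpres, ?_⟩
  · haveI : Nonempty V := ⟨v⟩
    exact ⟨⟨fun a b => (hT.connected.preconnected a b).elim (hreach a b)⟩, hac⟩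
  · refine Set.ncard_lt_ncard ?_ (Set.toFinite _)
    refine (Set.ssubset_iff_of_subset (fun x hx => hpres x hx)).2
      ⟨v, ⟨w, hadj, Or.inl hpw⟩, ?_⟩
    rintro ⟨u, hu, hp⟩
    exact hv u hu hp
end

section
/- Every connected port-labeled graph on n ≥ 2 vertices has at least one Port-One tree, i.e., a spanning tree T such that every vertex is incident to at least one edge of T that is port-1-incident. -/
/-- Every connected port-labeled graph on `n ≥ 2` vertices has at
least one Port-One tree, i.e., a spanning tree `T` (`T ≤ G`, connected and
acyclic on the full vertex set) such that every vertex is incident to at least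
one edge of `T` that is port-1-incident (carries port 1 at one endpoint). -/
theorem p1tree_exists {V : Type*} [Fintype V] (G : SimpleGraph V)
    [DecidableRel G.Adj] (p : V → V → ℕ)
    (hports : ∀ v : V, Set.BijOn (p v) (G.neighborSet v) (Set.Icc 1 (G.degree v)))
    (hG : G.Connected) (h2 : 2 ≤ Fintype.card V) :
    ∃ T : SimpleGraph V, T ≤ G ∧ T.IsTree ∧
      ∀ v : V, ∃ w : V, T.Adj v w ∧ (p v w = 1 ∨ p w v = 1) := by
  classical
  have : Nontrivial V := Fintype.one_lt_card_iff_nontrivial.mp h2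
  let H : SimpleGraph V :=
    { Adj := fun v w => G.Adj v w ∧ (p v w = 1 ∨ p w v = 1)
      symm := ⟨fun v w h => ⟨h.1.symm, h.2.symm⟩⟩
      loopless := ⟨fun v h => G.loopless.irrefl v h.1⟩ }
  have hHG : H ≤ G := fun v w h => h.1
  obtain ⟨F, hFH, hF, hr⟩ : ∃ F ≤ H, F.IsAcyclic ∧ F.Reachable = H.Reachable :=
    H.exists_isAcyclic_reachable_eq_le
  obtain ⟨T, hFT, hTG, hT⟩ : ∃ T, F ≤ T ∧ T ≤ G ∧ T.IsTree := by
    have := hG.exists_isTree_le_of_le_of_isAcyclic (hFH.trans hHG) hF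
    grind
  refine ⟨T, hTG, hT, fun v => ?_⟩
  have hd : 0 < G.degree v := hG.preconnected.degree_pos_of_nontrivial v
  obtain ⟨w, hw, hpw⟩ := (hports v).surjOn (show 1 ∈ Set.Icc 1 (G.degree v) from ⟨le_rfl, hd⟩)
  have hHvw : H.Adj v w := ⟨hw, Or.inl hpw⟩
  have hFr : F.Reachable v w := hr ▸ hHvw.reachable
  obtain ⟨q⟩ := hFr
  cases q with
  | nil => exact (H.loopless.irrefl _ hHvw).elim
  | cons h _ => exact ⟨_, hFT h, (hFH h).2⟩
end
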